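/- arXiv:2510.26654 — 9 statements merged into one kernel-verified Lean document; each statement's English description precedes it below -/
import Mathlib

section
/- Let ι be a type of propositional variables, T and A theories (sets of worlds), and W ⊆ ι a vocabulary. Define wsc(A;T;W) := {w | for every world w' that agrees with w on every variable in W, if w' ∈ T then w' ∈ A}. Then: (1) wsc(A;T;W) is a theory over W; (2) wsc(A;T;W) is a sufficient condition over W of A under T, i.e., T ∩ wsc(A;T;W) ⊆ A; (3) it is weakest: for every theory C over W with T ∩ C ⊆ A, one has T ∩ C ⊆ wsc(A;T;W). -/
def Agrees {ι : Type*} (W : Set ι) (w w' : ι → Bool) : Prop := ∀ i ∈ W, w i = w' i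

def IsOver {ι : Type*} (T : Set (ι → Bool)) (W : Set ι) : Prop :=
  ∀ w w', Agrees W w w' → (w ∈ T ↔ w' ∈ T)

def snc {ι : Type*} (A T : Set (ι → Bool)) (W : Set ι) : Set (ι → Bool) :=
  {w | ∃ w', w' ∈ T ∧ w' ∈ A ∧ Agrees W w' w}

def wsc {ι : Type*} (A T : Set (ι → Bool)) (W : Set ι) : Set (ι → Bool) :=
  {w | ∀ w', Agrees W w w' → w' ∈ T → w' ∈ A}


theorem wsc_spec {ι : Type*} (T A : Set (ι → Bool)) (W : Set ι) :
    IsOver (wsc A T W) W ∧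
    T ∩ wsc A T W ⊆ A ∧
    (∀ C : Set (ι → Bool), IsOver C W → T ∩ C ⊆ A → T ∩ C ⊆ wsc A T W) := by
  refine ⟨fun w w' h => ⟨fun hw v hv => hw v fun i hi => (h i hi).trans (hv i hi),
    fun hw v hv => hw v fun i hi => (h i hi).symm.trans (hv i hi)⟩,
    fun w hw => hw.2 w (fun _ _ => rfl) hw.1,
    fun C hC hTC w hw w' h hT => hTC ⟨hT, (hC w w' h).1 hw.2⟩⟩
end

section
/- Let ι be a type of propositional variables, T and A theories (sets of worlds), and W ⊆ ι a vocabulary. Then ⟨wsc(A;T;W), snc(A;T;W)⟩ is the tightest approximation of A over W under T: every sufficient condition C over W of A under T satisfies T ∩ C ⊆ wsc(A;T;W), and every necessary condition D over W of A under T satisfies T ∩ snc(A;T;W) ⊆ D. -/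
theorem wsc_snc_tightest_approximation {ι : Type*} (T A : Set (ι → Bool)) (W : Set ι) :
    (∀ C : Set (ι → Bool), IsOver C W → T ∩ C ⊆ A → T ∩ C ⊆ wsc A T W) ∧
    (∀ D : Set (ι → Bool), IsOver D W → T ∩ A ⊆ D → T ∩ snc A T W ⊆ D) := by
  refine ⟨?_, ?_⟩
  · rintro C hC hCA w ⟨-, hwC⟩ w' hww' hw'T
    exact hCA ⟨hw'T, (hC w w' hww').1 hwC⟩
  · rintro D hD hAD w ⟨-, w', hw'T, hw'A, hw'w⟩
    exact (hD w' w hw'w).1 (hAD ⟨hw'T, hw'A⟩)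
end

section
/- Let ι be a type of propositional variables, T_S a source theory, T_B a bridging theory, and V_A ⊆ ι a vocabulary. Then ⟨wsc(T_S;T_B;V_A), snc(T_S;T_B;V_A)⟩ is the tightest abstraction from T_S with respect to T_B over V_A: for every theory C over V_A, T_B ∩ C ⊆ T_S if and only if T_B ∩ C ⊆ wsc(T_S;T_B;V_A); and for every theory D over V_A, T_B ∩ T_S ⊆ D if and only if T_B ∩ snc(T_S;T_B;V_A) ⊆ D. -/
namespace Agrees

variable {ι : Type*} {W : Set ι} {u v w : ι → Bool}

theorem refl (W : Set ι) (w : ι → Bool) : Agrees W w w := fun _ _ => rfl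

theorem symm (h : Agrees W u v) : Agrees W v u := fun i hi => (h i hi).symm

theorem trans (h : Agrees W u v) (h' : Agrees W v w) : Agrees W u w :=
  fun i hi => (h i hi).trans (h' i hi)

end Agrees

theorem isOver_wsc {ι : Type*} (A T : Set (ι → Bool)) (W : Set ι) : IsOver (wsc A T W) W :=
  fun _ _ h => ⟨fun hw u hu => hw u (h.trans hu), fun hw u hu => hw u (h.symm.trans hu)⟩

theorem isOver_snc {ι : Type*} (A T : Set (ι → Bool)) (W : Set ι) : IsOver (snc A T W) W :=
  fun _ _ h => ⟨fun ⟨u, hT, hA, hu⟩ => ⟨u, hT, hA, hu.trans h⟩,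
    fun ⟨u, hT, hA, hu⟩ => ⟨u, hT, hA, hu.trans h.symm⟩⟩

theorem inter_subset_iff_inter_subset_wsc {ι : Type*} {A T C : Set (ι → Bool)} {W : Set ι}
    (hC : IsOver C W) : T ∩ C ⊆ A ↔ T ∩ C ⊆ wsc A T W :=
  ⟨fun h w hw u hu hT => h ⟨hT, (hC w u hu).1 hw.2⟩,
    fun h w hw => h hw w (Agrees.refl W w) hw.1⟩

theorem inter_subset_iff_inter_snc_subset {ι : Type*} {A T D : Set (ι → Bool)} {W : Set ι}
    (hD : IsOver D W) : T ∩ A ⊆ D ↔ T ∩ snc A T W ⊆ D :=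
  ⟨fun h w ⟨_, u, hT, hA, hu⟩ => (hD u w hu).1 (h ⟨hT, hA⟩),
    fun h w hw => h ⟨hw.1, w, hw.1, hw.2, Agrees.refl W w⟩⟩

theorem tightest_abstraction {ι : Type*} (TS TB : Set (ι → Bool)) (VA : Set ι) :
    IsOver (wsc TS TB VA) VA ∧ IsOver (snc TS TB VA) VA ∧
    (∀ C : Set (ι → Bool), IsOver C VA → (TB ∩ C ⊆ TS ↔ TB ∩ C ⊆ wsc TS TB VA)) ∧
    (∀ D : Set (ι → Bool), IsOver D VA → (TB ∩ TS ⊆ D ↔ TB ∩ snc TS TB VA ⊆ D)) :=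
  ⟨isOver_wsc TS TB VA, isOver_snc TS TB VA,
    fun _ hC => inter_subset_iff_inter_subset_wsc hC,
    fun _ hD => inter_subset_iff_inter_snc_subset hD⟩
end

section
/- Let ι be a type of propositional variables, T_S a source theory, T_B a bridging theory, and V_A ⊆ ι a vocabulary. If ⟨T1^l, T1^u⟩ and ⟨T2^l, T2^u⟩ are both tightest abstractions from T_S with respect to T_B over V_A, then their bounds are equivalent under T_B: T_B ∩ T1^l = T_B ∩ T2^l and T_B ∩ T1^u = T_B ∩ T2^u. -/
theorem tightest_abstraction_unique {ι : Type*}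
    (TS TB T1l T1u T2l T2u : Set (ι → Bool)) (VA : Set ι)
    (h1l : IsOver T1l VA) (h1u : IsOver T1u VA)
    (h2l : IsOver T2l VA) (h2u : IsOver T2u VA)
    (h1suff : ∀ C : Set (ι → Bool), IsOver C VA → (TB ∩ C ⊆ TS ↔ TB ∩ C ⊆ T1l))
    (h1nec : ∀ D : Set (ι → Bool), IsOver D VA → (TB ∩ TS ⊆ D ↔ TB ∩ T1u ⊆ D))
    (h2suff : ∀ C : Set (ι → Bool), IsOver C VA → (TB ∩ C ⊆ TS ↔ TB ∩ C ⊆ T2l))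
    (h2nec : ∀ D : Set (ι → Bool), IsOver D VA → (TB ∩ TS ⊆ D ↔ TB ∩ T2u ⊆ D)) :
    TB ∩ T1l = TB ∩ T2l ∧ TB ∩ T1u = TB ∩ T2u := by
  have hl : TB ∩ T1l ⊆ T2l :=
    (h2suff T1l h1l).1 ((h1suff T1l h1l).2 Set.inter_subset_right)
  have hl' : TB ∩ T2l ⊆ T1l :=
    (h1suff T2l h2l).1 ((h2suff T2l h2l).2 Set.inter_subset_right)
  have hu : TB ∩ T1u ⊆ T2u :=
    (h1nec T2u h2u).1 ((h2nec T2u h2u).2 Set.inter_subset_right)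
  have hu' : TB ∩ T2u ⊆ T1u :=
    (h2nec T1u h1u).1 ((h1nec T1u h1u).2 Set.inter_subset_right)
  exact ⟨(Set.subset_inter Set.inter_subset_left hl).antisymm
      (Set.subset_inter Set.inter_subset_left hl'),
    (Set.subset_inter Set.inter_subset_left hu).antisymm
      (Set.subset_inter Set.inter_subset_left hu')⟩
end

section
/- Let ι be a type of propositional variables, T_S a source theory, T_B a bridging theory, and V_A ⊆ ι a vocabulary. If ⟨T^l, T^u⟩ is an α-abstraction from T_S with respect to T_B over V_A that is exact, i.e., T_B ∩ T^l = T_B ∩ T^u, then ⟨T^l, T^u⟩ is a tightest abstraction from T_S with respect to T_B over V_A: for every theory C over V_A, T_B ∩ C ⊆ T_S if and only if T_B ∩ C ⊆ T^l; and for every theory D over V_A, T_B ∩ T_S ⊆ D if and only if T_B ∩ T^u ⊆ D. -/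
theorem exact_abstraction_is_tightest {ι : Type*}
    (TS TB Tl Tu : Set (ι → Bool)) (VA : Set ι)
    (hl : IsOver Tl VA) (hu : IsOver Tu VA)
    (hsuff : ∀ C : Set (ι → Bool), IsOver C VA → TB ∩ C ⊆ Tl → TB ∩ C ⊆ TS)
    (hnec : ∀ D : Set (ι → Bool), IsOver D VA → TB ∩ Tu ⊆ D → TB ∩ TS ⊆ D)
    (hexact : TB ∩ Tl = TB ∩ Tu) :
    (∀ C : Set (ι → Bool), IsOver C VA → (TB ∩ C ⊆ TS ↔ TB ∩ C ⊆ Tl)) ∧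
    (∀ D : Set (ι → Bool), IsOver D VA → (TB ∩ TS ⊆ D ↔ TB ∩ Tu ⊆ D)) := by
  have hlS : TB ∩ Tl ⊆ TS := hsuff Tl hl Set.inter_subset_right
  have hSu : TB ∩ TS ⊆ Tu := hnec Tu hu Set.inter_subset_right
  refine ⟨fun C hC => ⟨fun h w hw => ?_, hsuff C hC⟩,
    fun D hD => ⟨fun h w hw => ?_, hnec D hD⟩⟩
  · have hwu : w ∈ TB ∩ Tu := ⟨hw.1, hSu ⟨hw.1, h hw⟩⟩
    exact (hexact ▸ hwu : w ∈ TB ∩ Tl).2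
  · exact h ⟨hw.1, hlS (hexact ▸ hw)⟩
end

section
/- Let ι be a type of propositional variables, T_S a source theory, T_B a bridging theory, and V_A ⊆ ι a vocabulary. Suppose there exists a theory T' over V_A with T_B ∩ T_S = T_B ∩ T' (i.e., T_B entails the equivalence of T_S and T'). Then the tightest abstraction ⟨wsc(T_S;T_B;V_A), snc(T_S;T_B;V_A)⟩ is exact: T_B ∩ wsc(T_S;T_B;V_A) = T_B ∩ snc(T_S;T_B;V_A), and moreover both intersections equal T_B ∩ T'. (This is the semantic content of the exactness theorem for definitional bridging theories with proper covers, where replacing each covered pattern by its defined concept yields such a theory T' over V_A.) -/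
theorem mem_iff_of_inter_eq {α : Type*} {B S S' : Set α} (h : B ∩ S = B ∩ S') {w : α}
    (hw : w ∈ B) : w ∈ S ↔ w ∈ S' := by
  simpa [hw] using Set.ext_iff.mp h w

theorem inter_wsc_eq {ι : Type*} {TS TB T' : Set (ι → Bool)} {VA : Set ι}
    (hT' : IsOver T' VA) (heq : TB ∩ TS = TB ∩ T') : TB ∩ wsc TS TB VA = TB ∩ T' := by
  ext w
  refine and_congr_right fun hw => ⟨fun h => ?_, fun h w' hag hw' => ?_⟩
  · exact (mem_iff_of_inter_eq heq hw).mp (h w (fun _ _ => rfl) hw)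
  · exact (mem_iff_of_inter_eq heq hw').mpr ((hT' w w' hag).mp h)

theorem inter_snc_eq {ι : Type*} {TS TB T' : Set (ι → Bool)} {VA : Set ι}
    (hT' : IsOver T' VA) (heq : TB ∩ TS = TB ∩ T') : TB ∩ snc TS TB VA = TB ∩ T' := by
  ext w
  refine and_congr_right fun hw => ⟨?_, fun h => ?_⟩
  · rintro ⟨w', hw', hS, hag⟩
    exact (hT' w' w hag).mp ((mem_iff_of_inter_eq heq hw').mp hS)
  · exact ⟨w, hw, (mem_iff_of_inter_eq heq hw).mpr h, fun _ _ => rfl⟩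

theorem exactness_of_tightest_abstraction {ι : Type*}
    (TS TB T' : Set (ι → Bool)) (VA : Set ι)
    (hT' : IsOver T' VA) (heq : TB ∩ TS = TB ∩ T') :
    TB ∩ wsc TS TB VA = TB ∩ snc TS TB VA ∧
    TB ∩ wsc TS TB VA = TB ∩ T' ∧
    TB ∩ snc TS TB VA = TB ∩ T' := by
  have hw := inter_wsc_eq hT' heq
  have hs := inter_snc_eq hT' heq
  exact ⟨hw.trans hs.symm, hw, hs⟩
end

section
/- Let ι be a type of propositional variables, ⟨T_S^l, T_S^u⟩ a source pair of theories with T_B ∩ T_S^l ⊆ T_S^u, T_B a bridging theory, and V_A ⊆ ι a vocabulary. Then ⟨wsc(T_S^l;T_B;V_A), snc(T_S^u;T_B;V_A)⟩ is the tightest layered abstraction from ⟨T_S^l, T_S^u⟩ with respect to T_B over V_A: (1) T_B ∩ wsc(T_S^l;T_B;V_A) ⊆ snc(T_S^u;T_B;V_A); (2) for every theory C over V_A, T_B ∩ C ⊆ T_S^l if and only if T_B ∩ C ⊆ wsc(T_S^l;T_B;V_A); (3) for every theory D over V_A, T_B ∩ T_S^u ⊆ D if and only if T_B ∩ snc(T_S^u;T_B;V_A)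 ⊆ D. -/
theorem tightest_layered_abstraction {ι : Type*}
    (TSl TSu TB : Set (ι → Bool)) (VA : Set ι)
    (hS : TB ∩ TSl ⊆ TSu) :
    TB ∩ wsc TSl TB VA ⊆ snc TSu TB VA ∧
    (∀ C : Set (ι → Bool), IsOver C VA → (TB ∩ C ⊆ TSl ↔ TB ∩ C ⊆ wsc TSl TB VA)) ∧
    (∀ D : Set (ι → Bool), IsOver D VA → (TB ∩ TSu ⊆ D ↔ TB ∩ snc TSu TB VA ⊆ D)) := by
  refine ⟨?_, fun C hC => ⟨?_, ?_⟩, fun D hD => ⟨?_, ?_⟩⟩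
  · rintro w ⟨hwB, hw⟩
    exact ⟨w, hwB, hS ⟨hwB, hw w (fun _ _ => rfl) hwB⟩, fun _ _ => rfl⟩
  · rintro h w ⟨-, hwC⟩ w' hww' hw'B
    exact h ⟨hw'B, (hC w w' hww').1 hwC⟩
  · intro h w hw
    exact h hw w (fun _ _ => rfl) hw.1
  · rintro h w ⟨-, w', hw'B, hw'S, hw'w⟩
    exact (hD w' w hw'w).1 (h ⟨hw'B, hw'S⟩)
  · rintro h w ⟨hwB, hwS⟩
    exact h ⟨hwB, w, hwB, hwS, fun _ _ => rfl⟩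
end

section
/- Let ι be a type of propositional variables and V_S, V_A', V_A'' ⊆ ι vocabularies with V_S ∩ V_A'' = ∅. Let T_S^l be a theory over V_S, T_B' a theory over V_S ∪ V_A', and T_B'' a theory over V_A' ∪ V_A''. Then the iterated weakest sufficient condition wsc(wsc(T_S^l;T_B';V_A');T_B'';V_A'') is the lower bound of the tightest abstraction from T_S^l with respect to the combined bridging theory T_B' ∩ T_B'' over V_A'': for every theory C over V_A'', (T_B' ∩ T_B'') ∩ C ⊆ T_S^l if and only if (T_B' ∩ T_B'') ∩ C ⊆ wsc(wsc(T_S^l;T_B';V_A');T_B'';V_A''). -/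
theorem layered_wsc_compositional {ι : Type*}
    (VS VA' VA'' : Set ι) (hdisj : VS ∩ VA'' = ∅)
    (TSl TB' TB'' : Set (ι → Bool))
    (hTS : IsOver TSl VS) (hTB' : IsOver TB' (VS ∪ VA')) (hTB'' : IsOver TB'' (VA' ∪ VA'')) :
    ∀ C : Set (ι → Bool), IsOver C VA'' →
      ((TB' ∩ TB'') ∩ C ⊆ TSl ↔
       (TB' ∩ TB'') ∩ C ⊆ wsc (wsc TSl TB' VA') TB'' VA'') := by
  classical
  intro C hC
  constructor
  · rintro h w ⟨⟨-, -⟩, hwC⟩ w' hww' hw' w'' hw'w'' hw''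
    let u : ι → Bool := fun i => if i ∈ VS then w'' i else w' i
    have huS : Agrees VS u w'' := fun i hi => if_pos hi
    have huA' : Agrees VA' u w' := fun i hi => by
      by_cases hS : i ∈ VS
      · exact (if_pos hS).trans (hw'w'' i hi).symm
      · exact if_neg hS
    have huA'' : Agrees VA'' u w' := fun i hi =>
      if_neg fun hS => (Set.eq_empty_iff_forall_notMem.mp hdisj i) ⟨hS, hi⟩
    have huB' : u ∈ TB' := (hTB' u w'' fun i hi =>
      hi.elim (huS i) fun hA => (huA' i hA).trans (hw'w'' i hA)).mpr hw''
    have huB'' : u ∈ TB'' := (hTB'' u w' fun i hi => hi.elim (huA' i) (huA'' i)).mpr hw'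
    have huC : u ∈ C := (hC w u fun i hi => (hww' i hi).trans (huA'' i hi).symm).mp hwC
    exact (hTS u w'' huS).mp (h ⟨⟨huB', huB''⟩, huC⟩)
  · intro h w hw
    exact h hw w (fun _ _ => rfl) hw.1.2 w (fun _ _ => rfl) hw.1.1
end

section
/- Let ι be a type of propositional variables and V_S, V_A', V_A'' ⊆ ι vocabularies with V_S ∩ V_A'' = ∅. Let T_S^u be a theory over V_S, T_B' a theory over V_S ∪ V_A', and T_B'' a theory over V_A' ∪ V_A''. Then the iterated strongest necessary condition snc(snc(T_S^u;T_B';V_A');T_B'';V_A'') is the upper bound of the tightest abstraction from T_S^u with respect to the combined bridging theory T_B' ∩ T_B'' over V_A'': for every theory D over V_A'', (T_B' ∩ T_B'') ∩ T_S^u ⊆ D if and only if (T_B' ∩ T_B'') ∩ snc(snc(T_S^u;T_B';V_A');T_B'';V_A'') ⊆ D. -/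
/-- Two worlds that agree on `V` can be glued into a world agreeing with the first on `S ∪ V`
and with the second on `V ∪ W`, when `S` and `W` are disjoint. -/
theorem Agrees.exists_glue {ι : Type*} {S V W : Set ι} (hSW : S ∩ W = ∅) {v u : ι → Bool}
    (h : Agrees V v u) : ∃ x, Agrees (S ∪ V) v x ∧ Agrees (V ∪ W) u x := by
  classical
  refine ⟨fun i => if i ∈ S ∪ V then v i else u i, fun i hi => (if_pos hi).symm, fun i hi => ?_⟩
  by_cases hV : i ∈ V
  · simp [hV, h i hV]
  · have hW : i ∈ W := hi.resolve_left hV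
    have hS : i ∉ S := fun hS => (hSW ▸ ⟨hS, hW⟩ : i ∈ (∅ : Set ι))
    simp [hV, hS]

theorem layered_snc_compositional {ι : Type*}
    (VS VA' VA'' : Set ι) (hdisj : VS ∩ VA'' = ∅)
    (TSu TB' TB'' : Set (ι → Bool))
    (hTS : IsOver TSu VS) (hTB' : IsOver TB' (VS ∪ VA')) (hTB'' : IsOver TB'' (VA' ∪ VA'')) :
    ∀ D : Set (ι → Bool), IsOver D VA'' →
      ((TB' ∩ TB'') ∩ TSu ⊆ D ↔
       (TB' ∩ TB'') ∩ snc (snc TSu TB' VA') TB'' VA'' ⊆ D) := by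
  intro D hD
  constructor
  · rintro h w ⟨-, u, huB, ⟨v, hvB, hvS, hvu⟩, huw⟩
    obtain ⟨x, hvx, hux⟩ := hvu.exists_glue hdisj
    have hxD : x ∈ D := h ⟨⟨(hTB' v x hvx).1 hvB, (hTB'' u x hux).1 huB⟩,
      (hTS v x fun i hi => hvx i (Or.inl hi)).1 hvS⟩
    exact (hD u w huw).1 ((hD u x fun i hi => hux i (Or.inr hi)).2 hxD)
  · rintro h w ⟨⟨hB', hB''⟩, hS⟩
    exact h ⟨⟨hB', hB''⟩, w, hB'', ⟨w, hB', hS, fun _ _ => rfl⟩, fun _ _ => rfl⟩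
end
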